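/- Let H be a complex Hilbert space, J a signature operator on H, L a densely defined positive self-adjoint operator in H, and B := JL. Assume B is similar to a self-adjoint operator in H. Then for every φ₊ ∈ H₊ there exists a unique function ψ : [0, ∞) → H which is continuous on [0, ∞), continuously differentiable on (0, ∞), satisfies ψ(x) ∈ dom B and ψ′(x) = −Bψ(x) for all x > 0, satisfies P₊ψ(0) = φ₊, and satisfies ‖ψ(x)‖ → 0 as x → +∞. -/

import Mathlib

open scoped ComplexOrder InnerProductSpace

noncomputable section

variable {H : Type*} [NormedAddCommGroup H] [InnerProductSpace ℂ H] [CompleteSpace H]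

/-- `J` is a signature operator: `J = J* = J⁻¹`. -/
def IsSignatureOperator (J : H →L[ℂ] H) : Prop :=
  IsSelfAdjoint J ∧ J.comp J = ContinuousLinearMap.id ℂ H

/-- The orthogonal projection onto `H₊ = ker (J - I)`, which equals `(I + J)/2`
for a signature operator `J`. -/
def Pplus (J : H →L[ℂ] H) : H →L[ℂ] H := (2⁻¹ : ℂ) • (ContinuousLinearMap.id ℂ H + J)

/-- The orthogonal projection onto `H₋ = ker (J + I)`, which equals `(I - J)/2`
for a signature operator `J`. -/
def Pminus (J : H →L[ℂ] H) : H →L[ℂ] H := (2⁻¹ : ℂ) • (ContinuousLinearMap.id ℂ H - J)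

/-- The composition `J ∘ L` of a bounded operator `J` with an unbounded operator `L`,
as an unbounded operator with the same domain as `L`. -/
def pmapComp (J : H →L[ℂ] H) (L : H →ₗ.[ℂ] H) : H →ₗ.[ℂ] H :=
  { domain := L.domain
    toFun := (J : H →ₗ[ℂ] H).comp L.toFun }

/-- `L` is a positive operator: `⟨L h, h⟩ > 0` for every nonzero `h ∈ dom L`. -/
def IsPositivePMap (L : H →ₗ.[ℂ] H) : Prop :=
  ∀ h : L.domain, (h : H) ≠ 0 → 0 < ⟪L h, (h : H)⟫_ℂ

/-- `B` is similar to a self-adjoint operator: there is a bounded operator `S` with bounded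
inverse mapping `dom B` onto the domain of a self-adjoint operator `A` such that
`A (S h) = S (B h)` for all `h ∈ dom B`. -/
def SimilarToSelfAdjoint (B : H →ₗ.[ℂ] H) : Prop :=
  ∃ (S : H ≃L[ℂ] H) (A : H →ₗ.[ℂ] H), IsSelfAdjoint A ∧
    (A.domain : Set H) = (fun h => S h) '' (B.domain : Set H) ∧
    ∀ (h : B.domain) (hSh : S (h : H) ∈ A.domain), A ⟨S (h : H), hSh⟩ = S (B h)

/-- `ψ` solves `ψ' = -B ψ + f` on the set `s` with a continuous derivative:
on `s`, `ψ` takes values in `dom B`, is differentiable with derivative `ψ'`,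
`ψ'` is continuous on `s`, and `ψ' x = -B (ψ x) + f x`. -/
def IsStrongSolutionOn (B : H →ₗ.[ℂ] H) (f : ℝ → H) (ψ : ℝ → H) (s : Set ℝ) : Prop :=
  ∃ ψ' : ℝ → H, ContinuousOn ψ' s ∧
    ∀ x ∈ s, HasDerivAt ψ (ψ' x) x ∧
      ∃ hx : ψ x ∈ B.domain, ψ' x = -(B ⟨ψ x, hx⟩) + f x

theorem IsSelfAdjoint.mem_graph_iff_inner {A : H →ₗ.[ℂ] H} (hA : IsSelfAdjoint A) {u v : H} :
    (u, v) ∈ A.graph ↔ ∀ a b, (a, b) ∈ A.graph → ⟪b, u⟫_ℂ = ⟪a, v⟫_ℂ := by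
  have h : A.graph = A.graph.adjoint := by
    conv_lhs => rw [← LinearPMap.isSelfAdjoint_def.mp hA]
    exact LinearPMap.adjoint_graph_eq_graph_adjoint hA.dense_domain
  conv_lhs => rw [h]
  simp only [Submodule.mem_adjoint_iff, sub_eq_zero]

/-- The bounded operators `D = (1 + A²)⁻¹` and `K = A (1 + A²)⁻¹`, characterized through the graph
of `A`. -/
structure IsResolventPair (A : H →ₗ.[ℂ] H) (D K : H →L[ℂ] H) : Prop where
  mem_graph_fst : ∀ h, (D h, K h) ∈ A.graph
  mem_graph_snd : ∀ h, (K h, h - D h) ∈ A.graph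

theorem IsSelfAdjoint.exists_isResolventPair {A : H →ₗ.[ℂ] H} (hA : IsSelfAdjoint A) :
    ∃ D K : H →L[ℂ] H, IsResolventPair A D K := by
  let e := WithLp.prodContinuousLinearEquiv 2 ℂ H H
  let Γ : Submodule ℂ (WithLp 2 (H × H)) := A.graph.comap (e : WithLp 2 (H × H) →ₗ[ℂ] H × H)
  have hΓ : IsClosed (Γ : Set (WithLp 2 (H × H))) := hA.isClosed.preimage e.continuous
  have : CompleteSpace Γ := hΓ.completeSpace_coe
  let T : H →L[ℂ] H × H := (e : WithLp 2 (H × H) →L[ℂ] H × H) ∘L Γ.starProjection ∘L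
    (e.symm : H × H →L[ℂ] WithLp 2 (H × H)) ∘L ContinuousLinearMap.inl ℂ H H
  refine ⟨ContinuousLinearMap.fst ℂ H H ∘L T, ContinuousLinearMap.snd ℂ H H ∘L T,
    fun h => Γ.starProjection_apply_mem (e.symm (h, 0)), fun h => ?_⟩
  rw [hA.mem_graph_iff_inner]
  intro a b hab
  have key : ⟪e.symm (a, b), e.symm (h, 0) - Γ.starProjection (e.symm (h, 0))⟫_ℂ = 0 :=
    (Submodule.mem_orthogonal _ _).mp (Γ.sub_starProjection_mem_orthogonal (e.symm (h, 0))) _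
      (by simpa [Γ] using hab)
  rw [WithLp.prod_inner_apply] at key
  have key' : ⟪a, h - (T h).1⟫_ℂ + ⟪b, 0 - (T h).2⟫_ℂ = 0 := key
  rw [zero_sub, inner_neg_right, ← sub_eq_add_neg, sub_eq_zero] at key'
  exact key'.symm

namespace IsResolventPair

variable {A : H →ₗ.[ℂ] H} {D K : H →L[ℂ] H}

theorem eq_of_mem_graph (hA : IsSelfAdjoint A) (hDK : IsResolventPair A D K) {h u v : H}
    (huv : (u, v) ∈ A.graph) (hv : (v, h - u) ∈ A.graph) : D h = u ∧ K h = v := by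
  have h₁ : (D h - u, K h - v) ∈ A.graph := A.graph.sub_mem (hDK.mem_graph_fst h) huv
  have h₂ : (K h - v, -(D h - u)) ∈ A.graph := by
    have := A.graph.sub_mem (hDK.mem_graph_snd h) hv
    rw [Prod.mk_sub_mk] at this
    convert this using 2
    abel
  have h₃ := hA.mem_graph_iff_inner.mp h₂ _ _ h₁
  rw [inner_neg_right] at h₃
  have h₄ : ‖K h - v‖ ^ 2 = -‖D h - u‖ ^ 2 := by
    rw [inner_self_eq_norm_sq_to_K, inner_self_eq_norm_sq_to_K] at h₃
    exact_mod_cast h₃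
  have h₅ : ‖D h - u‖ = 0 := by nlinarith [sq_nonneg ‖K h - v‖, sq_nonneg ‖D h - u‖]
  have h₆ : ‖K h - v‖ = 0 := by nlinarith [sq_nonneg ‖K h - v‖, sq_nonneg ‖D h - u‖]
  exact ⟨sub_eq_zero.mp (norm_eq_zero.mp h₅), sub_eq_zero.mp (norm_eq_zero.mp h₆)⟩

theorem inner_fst (hA : IsSelfAdjoint A) (hDK : IsResolventPair A D K) (h g : H) :
    ⟪D h, g⟫_ℂ = ⟪D h, D g⟫_ℂ + ⟪K h, K g⟫_ℂ := by
  rw [hA.mem_graph_iff_inner.mp (hDK.mem_graph_snd g) _ _ (hDK.mem_graph_fst h), ← inner_add_right]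
  simp

theorem isSelfAdjoint_fst (hA : IsSelfAdjoint A) (hDK : IsResolventPair A D K) :
    IsSelfAdjoint D := by
  rw [ContinuousLinearMap.isSelfAdjoint_iff_isSymmetric]
  intro h g
  change ⟪D h, g⟫_ℂ = ⟪h, D g⟫_ℂ
  rw [hDK.inner_fst hA h g, ← inner_conj_symm h (D g), hDK.inner_fst hA g h]
  simp

theorem isSelfAdjoint_snd (hA : IsSelfAdjoint A) (hDK : IsResolventPair A D K) :
    IsSelfAdjoint K := by
  rw [ContinuousLinearMap.isSelfAdjoint_iff_isSymmetric]
  intro h g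
  change ⟪K h, g⟫_ℂ = ⟪h, K g⟫_ℂ
  have h₁ := hA.mem_graph_iff_inner.mp (hDK.mem_graph_snd g) _ _ (hDK.mem_graph_snd h)
  have h₂ := hA.mem_graph_iff_inner.mp (hDK.mem_graph_fst g) _ _ (hDK.mem_graph_fst h)
  rw [inner_sub_left, inner_sub_right] at h₁
  linear_combination h₂ - h₁

theorem norm_fst_apply_le (hA : IsSelfAdjoint A) (hDK : IsResolventPair A D K) (h : H) :
    ‖D h‖ ≤ ‖h‖ := by
  have h₁ := congrArg Complex.re (hDK.inner_fst hA h h)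
  have h₂ : Complex.re ⟪D h, h⟫_ℂ ≤ ‖D h‖ * ‖h‖ := re_inner_le_norm (𝕜 := ℂ) _ _
  have h₃ : Complex.re ⟪D h, D h⟫_ℂ = ‖D h‖ ^ 2 := inner_self_eq_norm_sq (𝕜 := ℂ) _
  have h₄ : 0 ≤ Complex.re ⟪K h, K h⟫_ℂ := inner_self_nonneg (𝕜 := ℂ)
  rw [Complex.add_re] at h₁
  by_contra! hlt
  nlinarith [norm_nonneg h, norm_nonneg (D h)]

theorem spectrum_fst_subset (hA : IsSelfAdjoint A) (hDK : IsResolventPair A D K) :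
    spectrum ℝ D ⊆ Set.Icc 0 1 := by
  intro d hd
  constructor
  · refine spectrum_nonneg_of_nonneg (a := D) ?_ hd
    rw [ContinuousLinearMap.nonneg_iff_isPositive, ContinuousLinearMap.isPositive_def']
    refine ⟨hDK.isSelfAdjoint_fst hA, fun h => ?_⟩
    rw [ContinuousLinearMap.reApplyInnerSelf_apply, hDK.inner_fst hA, map_add]
    exact add_nonneg inner_self_nonneg inner_self_nonneg
  · have h₁ : ‖d‖ ≤ ‖D‖ * ‖(1 : H →L[ℂ] H)‖ := spectrum.norm_le_norm_mul_of_mem hd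
    have h₂ : ‖D‖ ≤ 1 := D.opNorm_le_bound zero_le_one (by simpa using hDK.norm_fst_apply_le hA)
    have h₃ : ‖(1 : H →L[ℂ] H)‖ ≤ 1 := ContinuousLinearMap.norm_id_le
    calc d ≤ ‖d‖ := le_abs_self d
      _ ≤ _ := h₁
      _ ≤ 1 := by nlinarith [norm_nonneg D]

theorem commute_of_graph (hA : IsSelfAdjoint A) (hDK : IsResolventPair A D K) {M : H →L[ℂ] H}
    (hM : ∀ a b, (a, b) ∈ A.graph → (M a, M b) ∈ A.graph) : Commute D M ∧ Commute K M := by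
  have h₁ (h : H) : D (M h) = M (D h) ∧ K (M h) = M (K h) := by
    refine hDK.eq_of_mem_graph hA (hM _ _ (hDK.mem_graph_fst h)) ?_
    rw [← map_sub]
    exact hM _ _ (hDK.mem_graph_snd h)
  exact ⟨ContinuousLinearMap.ext fun h => (h₁ h).1, ContinuousLinearMap.ext fun h => (h₁ h).2⟩

theorem snd_comp (hA : IsSelfAdjoint A) (hDK : IsResolventPair A D K) (h : H) :
    D (K h) = K (D h) ∧ K (K h) = D h - D (D h) := by
  refine hDK.eq_of_mem_graph hA (hDK.mem_graph_snd (D h)) ?_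
  have := A.graph.sub_mem (hDK.mem_graph_fst h) (hDK.mem_graph_fst (D h))
  simpa using this

theorem commute (hA : IsSelfAdjoint A) (hDK : IsResolventPair A D K) : Commute D K :=
  ContinuousLinearMap.ext fun h => (hDK.snd_comp hA h).1

theorem snd_mul_self (hA : IsSelfAdjoint A) (hDK : IsResolventPair A D K) : K * K = D - D * D :=
  ContinuousLinearMap.ext fun h => (hDK.snd_comp hA h).2

omit [CompleteSpace H] in
theorem fst_injective (hDK : IsResolventPair A D K) : Function.Injective D := by
  rw [injective_iff_map_eq_zero]
  intro h hh
  have h₁ : K h = 0 := A.graph_fst_eq_zero_snd (hDK.mem_graph_fst h) hh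
  simpa [hh] using A.graph_fst_eq_zero_snd (hDK.mem_graph_snd h) h₁

omit [CompleteSpace H] in
theorem snd_injective (hDK : IsResolventPair A D K) (hinj : ∀ a, (a, (0 : H)) ∈ A.graph → a = 0) :
    Function.Injective K := by
  rw [injective_iff_map_eq_zero]
  intro h hh
  have h₁ := hDK.mem_graph_fst h
  rw [hh] at h₁
  exact hDK.fst_injective ((hinj _ h₁).trans (map_zero D).symm)

end IsResolventPair

open Filter Topology

/-- The function `d ↦ f √(d⁻¹ - 1)`, extended by zero to `d = 0`. -/
def radialLift (f : ℝ → ℝ) (d : ℝ) : ℝ := if d = 0 then 0 else f √(d⁻¹ - 1)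

theorem continuousOn_radialLift {f : ℝ → ℝ} (hf : Continuous f) (hf₀ : Tendsto f atTop (𝓝 0)) :
    ContinuousOn (radialLift f) (Set.Icc 0 1) := by
  intro d hd
  rcases hd.1.eq_or_lt with rfl | hpos
  · have h₁ : Tendsto (fun d : ℝ => f √(d⁻¹ - 1)) (𝓝[>] 0) (𝓝 0) :=
      hf₀.comp (Real.tendsto_sqrt_atTop.comp
        (tendsto_atTop_add_const_right _ (-1) tendsto_inv_nhdsGT_zero))
    have h₂ : ContinuousWithinAt (radialLift f) (Set.Ioi 0) 0 := by
      have h₃ : radialLift f 0 = 0 := if_pos rfl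
      rw [ContinuousWithinAt, h₃]
      refine h₁.congr' ?_
      filter_upwards [self_mem_nhdsWithin] with d hd
      exact (if_neg (ne_of_gt hd)).symm
    refine (continuousWithinAt_insert_self.mpr h₂).mono fun d hd => ?_
    rcases hd.1.eq_or_lt with h | h
    · exact Or.inl h.symm
    · exact Or.inr h
  · have h₁ : ContinuousAt (fun d : ℝ => f √(d⁻¹ - 1)) d :=
      hf.continuousAt.comp ((Real.continuous_sqrt.continuousAt).comp
        ((continuousAt_inv₀ hpos.ne').sub continuousAt_const))
    refine (h₁.congr ?_).continuousWithinAt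
    filter_upwards [eventually_ne_nhds hpos.ne'] with e he
    exact (if_neg he).symm

/-- For `D = (1 + A²)⁻¹`, the operator `f |A|`. -/
def radialCfc (D : H →L[ℂ] H) (f : ℝ → ℝ) : H →L[ℂ] H := cfc (radialLift f) D

theorem norm_radialCfc_le {D : H →L[ℂ] H} {f : ℝ → ℝ} {c : ℝ} (hf : ∀ s, 0 ≤ s → |f s| ≤ c) :
    ‖radialCfc D f‖ ≤ c := by
  have hc : 0 ≤ c := (abs_nonneg _).trans (hf 0 le_rfl)
  refine norm_cfc_le hc fun d _ => ?_
  rw [radialLift]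
  split_ifs with h
  · simpa using hc
  · exact hf _ (Real.sqrt_nonneg _)

theorem isSelfAdjoint_radialCfc (D : H →L[ℂ] H) (f : ℝ → ℝ) : IsSelfAdjoint (radialCfc D f) :=
  cfc_predicate _ _

theorem radialCfc_nonneg {D : H →L[ℂ] H} {f : ℝ → ℝ} (hf : ∀ s, 0 ≤ s → 0 ≤ f s) :
    0 ≤ radialCfc D f := by
  refine cfc_nonneg fun d _ => ?_
  rw [radialLift]
  split_ifs with h
  · exact le_rfl
  · exact hf _ (Real.sqrt_nonneg _)

section Algebra

variable {D : H →L[ℂ] H} (hσ : spectrum ℝ D ⊆ Set.Icc 0 1) {f g : ℝ → ℝ}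
  (hf : Continuous f) (hf₀ : Tendsto f atTop (𝓝 0))
  (hg : Continuous g) (hg₀ : Tendsto g atTop (𝓝 0))

include hσ hf hf₀ hg hg₀

theorem radialCfc_mul : radialCfc D f * radialCfc D g = radialCfc D (fun s => f s * g s) := by
  rw [radialCfc, radialCfc, ← cfc_mul _ _ D ((continuousOn_radialLift hf hf₀).mono hσ)
    ((continuousOn_radialLift hg hg₀).mono hσ), radialCfc]
  congr 1
  funext d
  simp only [radialLift]
  split_ifs <;> simp

theorem radialCfc_sub : radialCfc D f - radialCfc D g = radialCfc D (fun s => f s - g s) := by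
  rw [radialCfc, radialCfc, ← cfc_sub _ _ D ((continuousOn_radialLift hf hf₀).mono hσ)
    ((continuousOn_radialLift hg hg₀).mono hσ), radialCfc]
  congr 1
  funext d
  simp only [radialLift]
  split_ifs <;> simp

omit hg hg₀ in
theorem radialCfc_smul (c : ℝ) : c • radialCfc D f = radialCfc D (fun s => c * f s) := by
  rw [radialCfc, ← cfc_smul c _ D ((continuousOn_radialLift hf hf₀).mono hσ), radialCfc]
  congr 1
  funext d
  simp only [radialLift]
  split_ifs <;> simp

omit hf hf₀ hg hg₀ in
theorem radialCfc_one_add_sq_inv (hD : IsSelfAdjoint D) :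
    radialCfc D (fun s => (1 + s ^ 2)⁻¹) = D := by
  conv_rhs => rw [← cfc_id' ℝ D]
  refine cfc_congr fun d hd => ?_
  simp only [radialLift]
  split_ifs with h
  · exact h.symm
  · have h₁ : 0 < d := lt_of_le_of_ne (hσ hd).1 (Ne.symm h)
    rw [Real.sq_sqrt (sub_nonneg.mpr ((one_le_inv₀ h₁).mpr (hσ hd).2))]
    simp

end Algebra

theorem tendsto_one_add_sq_inv : Tendsto (fun s : ℝ => (1 + s ^ 2)⁻¹) atTop (𝓝 0) :=
  tendsto_inv_atTop_zero.comp
    (tendsto_atTop_add_const_left _ 1 (tendsto_pow_atTop two_ne_zero))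

theorem continuous_one_add_sq_inv : Continuous (fun s : ℝ => (1 + s ^ 2)⁻¹) :=
  Continuous.inv₀ (by fun_prop) fun s => by positivity

theorem tendsto_mul_one_add_sq_inv : Tendsto (fun s : ℝ => s * (1 + s ^ 2)⁻¹) atTop (𝓝 0) := by
  refine squeeze_zero' ?_ ?_ tendsto_inv_atTop_zero
  · filter_upwards [eventually_ge_atTop 0] with s hs
    positivity
  · filter_upwards [eventually_gt_atTop 0] with s hs
    rw [← div_eq_mul_inv, div_le_iff₀ (by positivity), inv_mul_eq_div, le_div_iff₀ hs]
    nlinarith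

theorem continuous_mul_one_add_sq_inv : Continuous (fun s : ℝ => s * (1 + s ^ 2)⁻¹) :=
  continuous_id.mul continuous_one_add_sq_inv

theorem tendsto_pow_mul_exp_neg {x : ℝ} (hx : 0 < x) (n : ℕ) :
    Tendsto (fun s : ℝ => s ^ n * Real.exp (-(x * s))) atTop (𝓝 0) := by
  have h := tendsto_rpow_mul_exp_neg_mul_atTop_nhds_zero n x hx
  simpa using h

theorem tendsto_exp_neg {x : ℝ} (hx : 0 < x) :
    Tendsto (fun s : ℝ => Real.exp (-(x * s))) atTop (𝓝 0) := by
  simpa using tendsto_pow_mul_exp_neg hx 0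

theorem tendsto_mul_exp_neg {x : ℝ} (hx : 0 < x) :
    Tendsto (fun s : ℝ => s * Real.exp (-(x * s))) atTop (𝓝 0) := by
  simpa using tendsto_pow_mul_exp_neg hx 1

theorem abs_exp_sub_exp_sub_le {x y s : ℝ} (hy : |y - x| ≤ x / 2) (hs : 0 ≤ s) (hx : 0 < x) :
    |Real.exp (-(y * s)) - Real.exp (-(x * s)) - (y - x) * -(s * Real.exp (-(x * s)))| ≤
      8 / x ^ 2 * (y - x) ^ 2 := by
  set a := -((y - x) * s) with ha
  have h₁ : Real.exp (-(y * s)) = Real.exp (-(x * s)) * Real.exp a := by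
    rw [← Real.exp_add]; congr 1; rw [ha]; ring
  have h₂ : Real.exp (-(y * s)) - Real.exp (-(x * s)) - (y - x) * -(s * Real.exp (-(x * s))) =
      Real.exp (-(x * s)) * (Real.exp a - 1 - a) := by rw [h₁, ha]; ring
  have h₃ : 0 ≤ Real.exp a - 1 - a := by linarith [Real.add_one_le_exp a]
  have h₄ : Real.exp a - 1 - a ≤ a ^ 2 * Real.exp |a| := by
    have h₅ : (1 - a) * Real.exp a ≤ 1 := by
      have := mul_le_mul_of_nonneg_right (Real.one_sub_le_exp_neg a) (Real.exp_pos a).le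
      rwa [← Real.exp_add, neg_add_cancel, Real.exp_zero] at this
    rcases le_total 0 a with h | h
    · rw [abs_of_nonneg h]
      have h₆ : Real.exp a - 1 ≤ a * Real.exp a := by linarith
      nlinarith
    · have h₇ : 1 ≤ Real.exp |a| := Real.one_le_exp (abs_nonneg a)
      nlinarith [Real.add_one_le_exp a, sq_nonneg a]
  have h₈ : |a| ≤ x / 2 * s := by
    rw [ha, abs_neg, abs_mul, abs_of_nonneg hs]
    exact mul_le_mul_of_nonneg_right hy hs
  have h₉ : Real.exp (-(x * s)) * Real.exp |a| ≤ Real.exp (-(x / 2 * s)) := by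
    rw [← Real.exp_add]
    exact Real.exp_le_exp.mpr (by linarith)
  have h₁₀ : s ^ 2 * Real.exp (-(x / 2 * s)) ≤ 8 / x ^ 2 := by
    have h₁₁ := Real.quadratic_le_exp_of_nonneg (x := x / 2 * s) (by positivity)
    rw [Real.exp_neg, ← div_eq_mul_inv, div_le_div_iff₀ (Real.exp_pos _) (by positivity)]
    nlinarith [mul_nonneg hx.le hs]
  rw [h₂, abs_of_nonneg (mul_nonneg (Real.exp_pos _).le h₃)]
  calc Real.exp (-(x * s)) * (Real.exp a - 1 - a)
      ≤ Real.exp (-(x * s)) * (a ^ 2 * Real.exp |a|) := by gcongr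
    _ = a ^ 2 * (Real.exp (-(x * s)) * Real.exp |a|) := by ring
    _ ≤ a ^ 2 * Real.exp (-(x / 2 * s)) := by gcongr
    _ = (s ^ 2 * Real.exp (-(x / 2 * s))) * (y - x) ^ 2 := by rw [ha]; ring
    _ ≤ 8 / x ^ 2 * (y - x) ^ 2 := by gcongr

/-- For `D = (1 + A²)⁻¹` and `x > 0`, the operator `exp (-x |A|)`. -/
def expRadial (D : H →L[ℂ] H) (x : ℝ) : H →L[ℂ] H := radialCfc D (fun s => Real.exp (-(x * s)))

section Semigroup

variable {D : H →L[ℂ] H} (hσ : spectrum ℝ D ⊆ Set.Icc 0 1)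

theorem norm_expRadial_le {x : ℝ} (hx : 0 ≤ x) : ‖expRadial D x‖ ≤ 1 :=
  norm_radialCfc_le fun s hs => by
    rw [abs_of_pos (Real.exp_pos _), Real.exp_le_one_iff]
    nlinarith

include hσ

theorem hasDerivAt_expRadial {x : ℝ} (hx : 0 < x) :
    HasDerivAt (expRadial D) (-radialCfc D (fun s => s * Real.exp (-(x * s)))) x := by
  rw [hasDerivAt_iff_isLittleO]
  refine Asymptotics.IsBigO.trans_isLittleO (g := fun y => (y - x) ^ 2) ?_ ?_
  · refine Asymptotics.IsBigO.of_bound (8 / x ^ 2) ?_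
    have h₁ : ∀ᶠ y in 𝓝 x, |y - x| < x / 2 := Metric.ball_mem_nhds x (half_pos hx)
    filter_upwards [h₁] with y hy
    have hy₀ : 0 < y := by linarith [(abs_lt.mp hy).1]
    have h₂ : expRadial D y - expRadial D x -
        (y - x) • -radialCfc D (fun s => s * Real.exp (-(x * s))) =
        radialCfc D (fun s => Real.exp (-(y * s)) - Real.exp (-(x * s)) -
          (y - x) * -(s * Real.exp (-(x * s)))) := by
      rw [smul_neg, ← neg_smul, radialCfc_smul hσ (by fun_prop) (tendsto_mul_exp_neg hx),
        expRadial, expRadial, radialCfc_sub hσ (by fun_prop) (tendsto_exp_neg hy₀) (by fun_prop)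
          (tendsto_exp_neg hx),
        radialCfc_sub hσ (by fun_prop)
          (by simpa using (tendsto_exp_neg hy₀).sub (tendsto_exp_neg hx)) (by fun_prop)
          (by simpa using (tendsto_mul_exp_neg hx).const_mul (-(y - x)))]
      congr 1
      funext s
      ring
    rw [h₂, Real.norm_of_nonneg (sq_nonneg (y - x))]
    exact norm_radialCfc_le fun s hs => abs_exp_sub_exp_sub_le hy.le hs hx
  · have h₁ : Tendsto (fun y => y - x) (𝓝 x) (𝓝 0) := by
      have h₂ := (continuous_sub_right x).tendsto x
      rwa [sub_self] at h₂
    simpa [Function.comp_def] using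
      (Asymptotics.isLittleO_pow_id (𝕜 := ℝ) one_lt_two).comp_tendsto h₁

theorem continuousOn_radialCfc_mul_exp :
    ContinuousOn (fun x => radialCfc D (fun s => s * Real.exp (-(x * s)))) (Set.Ioi 0) := by
  intro x hx
  have hx₂ : 0 < x / 2 := half_pos hx
  have h₁ : ContinuousAt (fun y => radialCfc D (fun s => s * Real.exp (-(x / 2 * s))) *
      expRadial D (y - x / 2)) x := by
    have h₂ : ContinuousAt (expRadial D) (x - x / 2) :=
      (hasDerivAt_expRadial hσ (by linarith)).continuousAt
    exact continuousAt_const.mul (h₂.comp (f := fun y : ℝ => y - x / 2) (by fun_prop))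
  refine (h₁.congr ?_).continuousWithinAt
  filter_upwards [lt_mem_nhds (show x / 2 < x by linarith)] with y hy
  rw [expRadial, radialCfc_mul hσ (by fun_prop) (tendsto_mul_exp_neg hx₂) (by fun_prop)
    (tendsto_exp_neg (by linarith))]
  congr 1
  funext s
  rw [mul_assoc, ← Real.exp_add]
  congr 2
  ring

end Semigroup

omit [CompleteSpace H] in
/-- A family of uniformly bounded operators which tends to zero after multiplication by an operator
with dense range tends to zero strongly. -/
theorem tendsto_zero_of_denseRange {ι : Type*} {l : Filter ι} {T : ι → H →L[ℂ] H} {C : ℝ}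
    (hT : ∀ᶠ i in l, ‖T i‖ ≤ C) {Q : H →L[ℂ] H} (hQ : DenseRange Q)
    (hTQ : Tendsto (fun i => T i * Q) l (𝓝 0)) (k : H) : Tendsto (fun i => T i k) l (𝓝 0) := by
  rw [Metric.tendsto_nhds]
  intro ε hε
  have hC : 0 < |C| + 1 := by positivity
  obtain ⟨g, hg⟩ := Metric.denseRange_iff.mp hQ k (ε / (2 * (|C| + 1))) (by positivity)
  have h₁ : Tendsto (fun i => T i (Q g)) l (𝓝 0) := by
    have := ((ContinuousLinearMap.apply ℂ H g).continuous.tendsto 0).comp hTQ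
    simpa [Function.comp_def] using this
  filter_upwards [hT, Metric.tendsto_nhds.mp h₁ (ε / 2) (half_pos hε)] with i hi hi'
  rw [dist_zero_right] at hi' ⊢
  rw [dist_eq_norm, lt_div_iff₀ (by positivity)] at hg
  have h₂ : T i k = T i (k - Q g) + T i (Q g) := by simp
  have h₃ : ‖T i (k - Q g)‖ ≤ (|C| + 1) * ‖k - Q g‖ :=
    (T i).le_of_opNorm_le (by linarith [le_abs_self C]) _
  rw [h₂]
  linarith [norm_add_le (T i (k - Q g)) (T i (Q g))]

theorem IsSelfAdjoint.denseRange_of_injective {T : H →L[ℂ] H} (hT : IsSelfAdjoint T)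
    (hinj : Function.Injective T) : DenseRange T := by
  have h₁ : (T.range)ᗮ = ⊥ := by
    rw [ContinuousLinearMap.orthogonal_range, hT.adjoint_eq]
    exact LinearMap.ker_eq_bot.mpr hinj
  have h₂ := Submodule.topologicalClosure_eq_top_iff.mpr h₁
  exact (Submodule.dense_iff_topologicalClosure_eq_top (s := T.range)).mpr h₂
/-- For `D = (1 + A²)⁻¹`, the operator `|A| (1 + A²)⁻¹`. -/
def absRadial (D : H →L[ℂ] H) : H →L[ℂ] H := radialCfc D (fun s => s * (1 + s ^ 2)⁻¹)

theorem absRadial_mul_self {D : H →L[ℂ] H} (hD : IsSelfAdjoint D)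
    (hσ : spectrum ℝ D ⊆ Set.Icc 0 1) : absRadial D * absRadial D = D - D * D := by
  conv_rhs => rw [← radialCfc_one_add_sq_inv hσ hD]
  rw [absRadial, radialCfc_mul hσ continuous_mul_one_add_sq_inv tendsto_mul_one_add_sq_inv
      continuous_mul_one_add_sq_inv tendsto_mul_one_add_sq_inv,
    radialCfc_mul hσ continuous_one_add_sq_inv tendsto_one_add_sq_inv
      continuous_one_add_sq_inv tendsto_one_add_sq_inv,
    radialCfc_sub (g := fun s => (1 + s ^ 2)⁻¹ * (1 + s ^ 2)⁻¹) hσ continuous_one_add_sq_inv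
      tendsto_one_add_sq_inv (continuous_one_add_sq_inv.mul continuous_one_add_sq_inv)
      (by simpa using tendsto_one_add_sq_inv.mul tendsto_one_add_sq_inv)]
  congr 1
  funext s
  field_simp
  ring

theorem tendsto_expRadial_nhdsGT_zero {D : H →L[ℂ] H} (hD : IsSelfAdjoint D)
    (hσ : spectrum ℝ D ⊆ Set.Icc 0 1) (hinj : Function.Injective D) (k : H) :
    Tendsto (fun x => expRadial D x k) (𝓝[>] 0) (𝓝 k) := by
  have h₁ : Tendsto (fun x => (expRadial D x - 1) k) (𝓝[>] 0) (𝓝 0) := by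
    refine tendsto_zero_of_denseRange (C := 1 + 1) ?_ (hD.denseRange_of_injective hinj) ?_ k
    · filter_upwards [self_mem_nhdsWithin] with x hx
      exact (norm_sub_le _ _).trans
        (add_le_add (norm_expRadial_le (le_of_lt hx)) ContinuousLinearMap.norm_id_le)
    · refine squeeze_zero_norm' ?_ (tendsto_nhdsWithin_of_tendsto_nhds tendsto_id)
      filter_upwards [self_mem_nhdsWithin] with x (hx : 0 < x)
      have h₂ : (expRadial D x - 1) * D = radialCfc D
          (fun s => Real.exp (-(x * s)) * (1 + s ^ 2)⁻¹ - (1 + s ^ 2)⁻¹) := by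
        rw [← radialCfc_sub hσ (by fun_prop (disch := intro; positivity))
            (by simpa using (tendsto_exp_neg hx).mul tendsto_one_add_sq_inv)
            continuous_one_add_sq_inv tendsto_one_add_sq_inv,
          ← radialCfc_mul hσ (by fun_prop) (tendsto_exp_neg hx)
            continuous_one_add_sq_inv tendsto_one_add_sq_inv,
          radialCfc_one_add_sq_inv hσ hD, sub_mul, one_mul, expRadial]
      rw [h₂]
      refine norm_radialCfc_le fun s hs => ?_
      have h₃ : Real.exp (-(x * s)) ≤ 1 := Real.exp_le_one_iff.mpr (by nlinarith)
      have h₄ := Real.one_sub_le_exp_neg (x * s)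
      rw [← sub_one_mul, abs_mul, abs_of_nonpos (by linarith), abs_of_pos (by positivity),
        ← div_eq_mul_inv, div_le_iff₀ (by positivity), id]
      nlinarith [sq_nonneg (s - 1), mul_nonneg hx.le hs, mul_nonneg hx.le (sq_nonneg (s - 1)),
        mul_nonneg hx.le (sq_nonneg s)]
  simpa using h₁.add_const k

theorem tendsto_expRadial_atTop {D : H →L[ℂ] H} (hσ : spectrum ℝ D ⊆ Set.Icc 0 1)
    (hinj : Function.Injective (absRadial D)) (k : H) :
    Tendsto (fun x => expRadial D x k) atTop (𝓝 0) := by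
  refine tendsto_zero_of_denseRange (C := 1) (Q := absRadial D) ?_
    ((isSelfAdjoint_radialCfc D _).denseRange_of_injective hinj) ?_ k
  · filter_upwards [eventually_ge_atTop 0] with x hx
    exact norm_expRadial_le hx
  · refine squeeze_zero_norm' ?_ tendsto_inv_atTop_zero
    filter_upwards [eventually_gt_atTop 0] with x hx
    rw [absRadial, expRadial, radialCfc_mul hσ (by fun_prop) (tendsto_exp_neg hx)
      continuous_mul_one_add_sq_inv tendsto_mul_one_add_sq_inv]
    refine norm_radialCfc_le fun s hs => ?_
    rw [abs_of_nonneg (by positivity), Real.exp_neg, inv_mul_eq_div,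
      div_le_iff₀ (Real.exp_pos _), inv_mul_eq_div, le_div_iff₀ hx, ← div_eq_mul_inv]
    have h₁ : s / (1 + s ^ 2) ≤ s := div_le_self hs (by nlinarith)
    nlinarith [Real.add_one_le_exp (x * s)]

/-- If `A` acts on `k` as `|A|` does, then `exp (-x |A|) k` lies in the domain of `A`, and `A` sends
it to `|A| exp (-x |A|) k`. -/
theorem IsResolventPair.expRadial_mem_graph {A : H →ₗ.[ℂ] H} {D K : H →L[ℂ] H}
    (hA : IsSelfAdjoint A) (hDK : IsResolventPair A D K) {k : H} (hk : K k = absRadial D k)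
    {x : ℝ} (hx : 0 < x) :
    (expRadial D x k, radialCfc D (fun s => s * Real.exp (-(x * s))) k) ∈ A.graph := by
  have hD := hDK.isSelfAdjoint_fst hA
  have hσ := hDK.spectrum_fst_subset hA
  have hcont : Continuous (fun s : ℝ => (1 + s ^ 2) * Real.exp (-(x * s))) := by fun_prop
  have htend : Tendsto (fun s : ℝ => (1 + s ^ 2) * Real.exp (-(x * s))) atTop (𝓝 0) := by
    simpa [add_mul] using (tendsto_exp_neg hx).add (tendsto_pow_mul_exp_neg hx 2)
  set V := radialCfc D (fun s => (1 + s ^ 2) * Real.exp (-(x * s))) with hV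
  have h₁ : D * V = expRadial D x := by
    conv_lhs => enter [1]; rw [← radialCfc_one_add_sq_inv hσ hD]
    rw [hV, radialCfc_mul hσ continuous_one_add_sq_inv tendsto_one_add_sq_inv hcont htend,
      expRadial]
    congr 1
    funext s
    field_simp
  have h₂ : V * absRadial D = radialCfc D (fun s => s * Real.exp (-(x * s))) := by
    rw [hV, absRadial, radialCfc_mul hσ hcont htend continuous_mul_one_add_sq_inv
      tendsto_mul_one_add_sq_inv]
    congr 1
    funext s
    field_simp
  have h₃ : Commute V K := (hDK.commute hA).cfc_real _
  have h₄ : K (V k) = radialCfc D (fun s => s * Real.exp (-(x * s))) k := by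
    rw [← h₂, ← mul_apply_eq_comp, ← h₃.eq, mul_apply_eq_comp, hk,
      mul_apply_eq_comp]
  rw [← h₄, ← h₁]
  exact hDK.mem_graph_fst (V k)

theorem IsResolventPair.absRadial_mul_self_eq {A : H →ₗ.[ℂ] H} {D K : H →L[ℂ] H}
    (hA : IsSelfAdjoint A) (hDK : IsResolventPair A D K) :
    absRadial D * absRadial D = K * K := by
  rw [absRadial_mul_self (hDK.isSelfAdjoint_fst hA) (hDK.spectrum_fst_subset hA),
    hDK.snd_mul_self hA]

omit [CompleteSpace H] in
theorem injective_of_mul_self_eq {R K : H →L[ℂ] H} (h : R * R = K * K)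
    (hK : Function.Injective K) : Function.Injective R := by
  have h₁ : Function.Injective (R * R) := by rw [h]; exact hK.comp hK
  exact Function.Injective.of_comp h₁

/-- The spectral projection of `K` to the positive half-line, for `R = |K|`. -/
theorem exists_sign_projection {R K : H →L[ℂ] H} (hR : IsSelfAdjoint R) (hK : IsSelfAdjoint K)
    (hRK : Commute R K) (hsq : R * R = K * K) :
    ∃ E : H →L[ℂ] H, IsSelfAdjoint E ∧ K * E = R * E ∧ (2 * E - 1) * R = K ∧
      ∀ M, IsSelfAdjoint M → Commute R M → Commute K M → Commute M E := by
  set N : Submodule ℂ H := (R + K).ker with hN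
  have hNc : IsClosed (N : Set H) := (R + K).isClosed_ker
  have : CompleteSpace N := hNc.completeSpace_coe
  set F : H →L[ℂ] H := N.starProjection with hF
  have hFsa : IsSelfAdjoint F := isSelfAdjoint_starProjection N
  have h₁ : (R + K) * F = 0 := ContinuousLinearMap.ext fun h =>
    LinearMap.mem_ker.mp (N.starProjection_apply_mem h)
  have hfix (T : H →L[ℂ] H) (hT : (R + K) * T = 0) : F * T = T := by
    ext h
    exact Submodule.starProjection_eq_self_iff.mpr
      (LinearMap.mem_ker.mpr (by simpa using congrArg (fun U : H →L[ℂ] H => U h) hT))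
  have h₂ : F * (R - K) = R - K := hfix _ (by
    rw [add_mul, mul_sub, mul_sub, hsq, hRK.eq]
    abel)
  have h₃ : (R - K) * F = R - K := by
    simpa [hR.star_eq, hK.star_eq, hFsa.star_eq] using congrArg star h₂
  have h₄ : F * (R + K) = 0 := by
    simpa [hR.star_eq, hK.star_eq, hFsa.star_eq] using congrArg star h₁
  refine ⟨1 - F, (IsSelfAdjoint.one _).sub hFsa, ?_, ?_, fun M hM hRM hKM => ?_⟩
  · rw [mul_sub, mul_sub, mul_one, mul_one]
    rw [sub_mul] at h₃
    rw [← sub_eq_zero, ← sub_eq_zero.mpr h₃]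
    abel
  · rw [mul_sub] at h₂
    rw [mul_add] at h₄
    have h₅ : (2 * (1 - F) - 1) * R = R - (F * R + F * R) := by noncomm_ring
    rw [h₅]
    have h₆ : F * R + F * R = (F * R - F * K) + (F * R + F * K) := by abel
    rw [h₆, h₂, h₄]
    abel
  · have h₅ : F * (M * F) = M * F := hfix _ (by
      rw [← mul_assoc, (hRM.add_left hKM).eq, mul_assoc, h₁, mul_zero])
    have h₆ : F * M * F = F * M := by
      simpa [hM.star_eq, hFsa.star_eq, mul_assoc] using congrArg star h₅
    have h₇ : Commute M F := by
      rw [mul_assoc] at h₆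
      exact h₅.symm.trans h₆
    exact (Commute.one_right M).sub_right h₇

theorem nonneg_mul_sign {R K E M : H →L[ℂ] H} (hR : 0 ≤ R) (hRd : DenseRange R)
    (hE : IsSelfAdjoint E) (hER : (2 * E - 1) * R = K) (hM : IsSelfAdjoint M)
    (hME : Commute M E) (hRM : Commute R M) (hRK : Commute R K) (hMK : 0 ≤ M * K) :
    0 ≤ M * (2 * E - 1) := by
  have hsa : IsSelfAdjoint (2 * E - 1) := by
    rw [two_mul]
    exact (hE.add hE).sub (IsSelfAdjoint.one _)
  have hcomm : Commute M (2 * E - 1) := by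
    rw [two_mul]
    exact (hME.add_right hME).sub_right (Commute.one_right M)
  rw [ContinuousLinearMap.nonneg_iff_isPositive, ContinuousLinearMap.isPositive_def']
  refine ⟨(hM.commute_iff hsa).mp hcomm, fun h => ?_⟩
  refine hRd.induction_on (p := fun h => 0 ≤ (M * (2 * E - 1)).reApplyInnerSelf h) h ?_ ?_
  · exact isClosed_Ici.preimage (ContinuousLinearMap.reApplyInnerSelf_continuous _)
  · intro g
    have h₁ : 0 ≤ R * (M * K) := Commute.mul_nonneg hR hMK (hRM.mul_right hRK)
    have h₂ := ((ContinuousLinearMap.nonneg_iff_isPositive _).mp h₁).re_inner_nonneg_left g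
    have h₃ : (M * (2 * E - 1)) (R g) = (M * K) g := by
      rw [← hER]
      rfl
    rw [ContinuousLinearMap.reApplyInnerSelf_apply, h₃]
    have h₄ : ⟪R ((M * K) g), g⟫_ℂ = ⟪(M * K) g, R g⟫_ℂ :=
      (ContinuousLinearMap.isSelfAdjoint_iff_isSymmetric.mp (IsSelfAdjoint.of_nonneg hR)) _ _
    rw [← h₄]
    exact h₂
theorem mem_graph_pmapComp_iff {J : H →L[ℂ] H} (hJ : IsSignatureOperator J) {L : H →ₗ.[ℂ] H}
    {u v : H} : (u, v) ∈ (pmapComp J L).graph ↔ (u, J v) ∈ L.graph := by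
  have hJJ (w : H) : J (J w) = w := congrArg (fun T : H →L[ℂ] H => T w) hJ.2
  simp only [LinearPMap.mem_graph_iff]
  constructor
  · rintro ⟨y, hy, rfl⟩
    exact ⟨y, hy, (hJJ (L y)).symm⟩
  · rintro ⟨y, hy, hv⟩
    exact ⟨y, hy, (congrArg J hv).trans (hJJ v)⟩

omit [CompleteSpace H] in
theorem IsPositivePMap.re_inner_nonneg {L : H →ₗ.[ℂ] H} (hL : IsPositivePMap L) {u v : H}
    (huv : (u, v) ∈ L.graph) : 0 ≤ Complex.re ⟪v, u⟫_ℂ := by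
  obtain ⟨y, rfl, rfl⟩ := (LinearPMap.mem_graph_iff _).mp huv
  by_cases hy : (y : H) = 0
  · simp [hy]
  · exact (Complex.pos_iff.mp (hL y hy)).1.le

omit [CompleteSpace H] in
theorem IsPositivePMap.eq_zero_of_re_inner {L : H →ₗ.[ℂ] H} (hL : IsPositivePMap L) {u v : H}
    (huv : (u, v) ∈ L.graph) (h : Complex.re ⟪v, u⟫_ℂ = 0) : u = 0 := by
  obtain ⟨y, rfl, rfl⟩ := (LinearPMap.mem_graph_iff _).mp huv
  by_contra hy
  exact (Complex.pos_iff.mp (hL y hy)).1.ne' h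

/-- Solutions of `ψ' = -JLψ` that decay at infinity and have vanishing incoming part at `0` are
trivial. -/
theorem eqOn_zero_of_decay {J : H →L[ℂ] H} (hJ : IsSignatureOperator J) {L : H →ₗ.[ℂ] H}
    (hL : IsPositivePMap L) {w w' : ℝ → H} (hw : ContinuousOn w (Set.Ici 0))
    (hderiv : ∀ x ∈ Set.Ioi (0 : ℝ), HasDerivAt w (-w' x) x ∧ (w x, J (w' x)) ∈ L.graph)
    (h0 : J (w 0) = -w 0) (hlim : Tendsto w atTop (𝓝 0)) : Set.EqOn w 0 (Set.Ici 0) := by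
  have hJsymm (a b : H) : ⟪J a, b⟫_ℂ = ⟪a, J b⟫_ℂ :=
    (ContinuousLinearMap.isSelfAdjoint_iff_isSymmetric.mp hJ.1) a b
  set q : ℝ → ℝ := fun x => Complex.re ⟪J (w x), w x⟫_ℂ with hq
  have hqc : ContinuousOn q (Set.Ici 0) :=
    Complex.continuous_re.comp_continuousOn ((J.continuous.comp_continuousOn hw).inner hw)
  have hqd : ∀ x ∈ Set.Ioi (0 : ℝ),
      HasDerivAt q (-(2 * Complex.re ⟪J (w' x), w x⟫_ℂ)) x := by
    intro x hx
    have h₁ := (hderiv x hx).1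
    have h₂ : HasDerivAt (fun x => J (w x)) (J (-w' x)) x :=
      ((J.restrictScalars ℝ).hasFDerivAt.comp_hasDerivAt x h₁)
    have h₃ := Complex.reCLM.hasFDerivAt.comp_hasDerivAt x (h₂.inner ℂ h₁)
    refine HasDerivAt.congr_deriv (f := q) h₃ ?_
    have h₄ : Complex.re ⟪w x, J (w' x)⟫_ℂ = Complex.re ⟪J (w' x), w x⟫_ℂ :=
      inner_re_symm (𝕜 := ℂ) _ _
    simp [hJsymm (w x), h₄]
    ring
  have hanti : AntitoneOn q (Set.Ici 0) := by
    refine antitoneOn_of_hasDerivWithinAt_nonpos (convex_Ici 0) hqc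
      (f' := fun x => -(2 * Complex.re ⟪J (w' x), w x⟫_ℂ)) ?_ ?_
    · intro x hx
      rw [interior_Ici] at hx
      exact (hqd x hx).hasDerivWithinAt
    · intro x hx
      rw [interior_Ici] at hx
      have := hL.re_inner_nonneg (hderiv x hx).2
      linarith
  have hqlim : Tendsto q atTop (𝓝 0) := by
    have h₁ : Tendsto (fun x => J (w x)) atTop (𝓝 0) := by
      simpa [Function.comp_def] using (J.continuous.tendsto 0).comp hlim
    simpa [Function.comp_def] using (Complex.continuous_re.tendsto _).comp (h₁.inner hlim)
  have hqnonneg : ∀ x ∈ Set.Ici (0 : ℝ), 0 ≤ q x := by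
    intro x hx
    refine le_of_tendsto hqlim ?_
    filter_upwards [eventually_ge_atTop x] with y hy
    exact hanti hx (le_trans hx hy) hy
  have hq0 : q 0 = -‖w 0‖ ^ 2 := by
    have h₁ : Complex.re ⟪w 0, w 0⟫_ℂ = ‖w 0‖ ^ 2 := inner_self_eq_norm_sq (𝕜 := ℂ) _
    simp only [hq]
    rw [h0, inner_neg_left, Complex.neg_re, h₁]
  have hqzero : ∀ x ∈ Set.Ici (0 : ℝ), q x = 0 := by
    intro x hx
    refine le_antisymm ((hanti Set.self_mem_Ici hx hx).trans ?_) (hqnonneg x hx)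
    rw [hq0]
    nlinarith [sq_nonneg ‖w 0‖]
  intro x hx
  rcases (show (0 : ℝ) ≤ x from hx).eq_or_lt with rfl | hpos
  · have h₁ := hqzero 0 hx
    rw [hq0] at h₁
    simpa using h₁
  · have h₁ : q =ᶠ[𝓝 x] fun _ => 0 := by
      filter_upwards [lt_mem_nhds hpos] with y hy
      exact hqzero y (le_of_lt hy)
    have h₂ := (hqd x hpos).unique ((hasDerivAt_const x (0 : ℝ)).congr_of_eventuallyEq h₁)
    exact hL.eq_zero_of_re_inner (hderiv x hpos).2 (by linarith)

/-- Decaying solutions of `ψ' = -Aψ` for initial data in the positive spectral subspace. -/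
theorem IsResolventPair.exists_decaying_solution {A : H →ₗ.[ℂ] H} {D K : H →L[ℂ] H}
    (hA : IsSelfAdjoint A) (hDK : IsResolventPair A D K) (hinj : Function.Injective K) {k : H}
    (hk : K k = absRadial D k) :
    ∃ ψ ψ' : ℝ → H, ψ 0 = k ∧ ContinuousOn ψ (Set.Ici 0) ∧ ContinuousOn ψ' (Set.Ioi 0) ∧
      (∀ x ∈ Set.Ioi (0 : ℝ), HasDerivAt ψ (-ψ' x) x ∧ (ψ x, ψ' x) ∈ A.graph) ∧
      Tendsto ψ atTop (𝓝 0) := by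
  have hD := hDK.isSelfAdjoint_fst hA
  have hσ := hDK.spectrum_fst_subset hA
  set ψ : ℝ → H := fun x => if x = 0 then k else expRadial D x k with hψ
  set ψ' : ℝ → H := fun x => radialCfc D (fun s => s * Real.exp (-(x * s))) k with hψ'
  have hψ0 : ψ 0 = k := if_pos rfl
  have hψne {x : ℝ} (hx : x ≠ 0) : ψ x = expRadial D x k := if_neg hx
  have heval : Continuous fun T : H →L[ℂ] H => T k :=
    (ContinuousLinearMap.apply ℂ H k).continuous
  have hderiv : ∀ x ∈ Set.Ioi (0 : ℝ), HasDerivAt ψ (-ψ' x) x := by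
    intro x hx
    have h₁ : HasDerivAt (fun y => expRadial D y k) (-ψ' x) x :=
      (((ContinuousLinearMap.apply ℂ H k).restrictScalars ℝ).hasFDerivAt.comp_hasDerivAt x
        (hasDerivAt_expRadial hσ hx))
    refine h₁.congr_of_eventuallyEq ?_
    filter_upwards [eventually_ne_nhds (ne_of_gt hx)] with y hy
    exact hψne hy
  refine ⟨ψ, ψ', hψ0, ?_, heval.comp_continuousOn (continuousOn_radialCfc_mul_exp hσ),
    fun x hx => ⟨hderiv x hx, ?_⟩, ?_⟩
  · intro x hx
    rcases (show (0 : ℝ) ≤ x from hx).eq_or_lt with rfl | hpos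
    · rw [← Set.Ioi_insert, continuousWithinAt_insert_self, ContinuousWithinAt, hψ0]
      refine (tendsto_expRadial_nhdsGT_zero hD hσ hDK.fst_injective k).congr' ?_
      filter_upwards [self_mem_nhdsWithin] with y hy
      exact (hψne (ne_of_gt hy)).symm
    · exact (hderiv x hpos).continuousAt.continuousWithinAt
  · rw [hψne (ne_of_gt hx)]
    exact hDK.expRadial_mem_graph hA hk hx
  · refine (tendsto_expRadial_atTop hσ
      (injective_of_mul_self_eq (hDK.absRadial_mul_self_eq hA) hinj) k).congr' ?_
    filter_upwards [eventually_ne_atTop 0] with y hy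
    exact (hψne hy).symm

/-- If `A` is self-adjoint and `A` is nonnegative with respect to the form of a bounded self-adjoint
operator `M` commuting with `A`, then `M sgn A` is nonnegative. -/
theorem exists_projection_nonneg_mul_sign {A : H →ₗ.[ℂ] H} {D K : H →L[ℂ] H}
    (hA : IsSelfAdjoint A) (hDK : IsResolventPair A D K) (hinj : Function.Injective K)
    {M : H →L[ℂ] H} (hM : IsSelfAdjoint M)
    (hMA : ∀ a b, (a, b) ∈ A.graph → (M a, M b) ∈ A.graph)
    (hpos : ∀ a b, (a, b) ∈ A.graph → 0 ≤ Complex.re ⟪M b, a⟫_ℂ) :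
    ∃ E : H →L[ℂ] H, K * E = absRadial D * E ∧ 0 ≤ M * (2 * E - 1) := by
  have hK := hDK.isSelfAdjoint_snd hA
  have hR : IsSelfAdjoint (absRadial D) := isSelfAdjoint_radialCfc D _
  have hRK : Commute (absRadial D) K := (hDK.commute hA).cfc_real _
  have hsq := hDK.absRadial_mul_self_eq hA
  obtain ⟨hDM, hKM⟩ := hDK.commute_of_graph hA hMA
  have hRM : Commute (absRadial D) M := hDM.cfc_real _
  obtain ⟨E, hE, hKE, hER, hEcomm⟩ := exists_sign_projection hR hK hRK hsq
  refine ⟨E, hKE, nonneg_mul_sign (radialCfc_nonneg fun s hs => by positivity)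
    (hR.denseRange_of_injective (injective_of_mul_self_eq hsq hinj)) hE hER hM
    (hEcomm M hM hRM hKM) hRM hRK ?_⟩
  rw [ContinuousLinearMap.nonneg_iff_isPositive, ContinuousLinearMap.isPositive_def']
  refine ⟨(hM.commute_iff hK).mp hKM.symm, fun h => ?_⟩
  rw [ContinuousLinearMap.reApplyInnerSelf_apply, mul_apply_eq_comp]
  have h₁ := hpos _ _ (hDK.mem_graph_fst h)
  have h₂ := hpos _ _ (hDK.mem_graph_snd h)
  have h₃ : ⟪M (h - D h), K h⟫_ℂ = ⟪h - D h, M (K h)⟫_ℂ :=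
    (ContinuousLinearMap.isSelfAdjoint_iff_isSymmetric.mp hM) _ _
  have h₄ : Complex.re ⟪h - D h, M (K h)⟫_ℂ = Complex.re ⟪M (K h), h - D h⟫_ℂ :=
    inner_re_symm (𝕜 := ℂ) _ _
  rw [h₃, h₄, inner_sub_right, Complex.sub_re] at h₂
  change 0 ≤ Complex.re ⟪M (K h), h⟫_ℂ
  linarith

theorem exists_solution {J : H →L[ℂ] H} (hJ : IsSignatureOperator J) {L : H →ₗ.[ℂ] H}
    (hLsa : IsSelfAdjoint L) (hLpos : IsPositivePMap L)
    (hsim : SimilarToSelfAdjoint (pmapComp J L)) {φp : H} (hφp : J φp = φp) :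
    ∃ ψ : ℝ → H, ContinuousOn ψ (Set.Ici 0) ∧
      IsStrongSolutionOn (pmapComp J L) (fun _ => 0) ψ (Set.Ioi 0) ∧
      Pplus J (ψ 0) = φp ∧ Tendsto (fun x => ‖ψ x‖) atTop (𝓝 0) := by
  obtain ⟨S, A, hA, hdom, hAS⟩ := hsim
  have hJJ (w : H) : J (J w) = w := congrArg (fun T : H →L[ℂ] H => T w) hJ.2
  have hJsymm (a b : H) : ⟪J a, b⟫_ℂ = ⟪a, J b⟫_ℂ :=
    (ContinuousLinearMap.isSelfAdjoint_iff_isSymmetric.mp hJ.1) a b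
  have hgraph {a b : H} (hab : (a, b) ∈ A.graph) :
      (S.symm a, S.symm b) ∈ (pmapComp J L).graph := by
    obtain ⟨⟨a, ha⟩, rfl, rfl⟩ := (LinearPMap.mem_graph_iff _).mp hab
    have ha' : a ∈ (fun h => S h) '' ((pmapComp J L).domain : Set H) := hdom ▸ ha
    obtain ⟨u, hu, rfl⟩ := ha'
    refine (LinearPMap.mem_graph_iff _).mpr ⟨⟨u, hu⟩, by simp, ?_⟩
    have h₁ := hAS ⟨u, hu⟩ ha
    exact (S.symm_apply_eq.mpr h₁).symm
  have hgraphL {a b : H} (hab : (a, b) ∈ A.graph) : (S.symm a, J (S.symm b)) ∈ L.graph :=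
    (mem_graph_pmapComp_iff hJ).mp (hgraph hab)
  obtain ⟨D, K, hDK⟩ := hA.exists_isResolventPair
  have hinj : Function.Injective K := by
    refine hDK.snd_injective fun a ha => ?_
    have h₁ := hLpos.eq_zero_of_re_inner (hgraphL ha) (by simp)
    simpa using h₁
  set T : H →L[ℂ] H := (S.symm : H →L[ℂ] H) with hT
  set M : H →L[ℂ] H := T.adjoint ∘L J ∘L T with hMdef
  have hM : IsSelfAdjoint M := hJ.1.adjoint_conj T
  have hMinner (a b : H) : ⟪M a, b⟫_ℂ = ⟪J (S.symm a), S.symm b⟫_ℂ :=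
    ContinuousLinearMap.adjoint_inner_left T b _
  have hMinner' (a b : H) : ⟪a, M b⟫_ℂ = ⟪S.symm a, J (S.symm b)⟫_ℂ :=
    ContinuousLinearMap.adjoint_inner_right T a _
  obtain ⟨E, hKE, hpos⟩ := exists_projection_nonneg_mul_sign hA hDK hinj hM
    (fun a b hab => hA.mem_graph_iff_inner.mpr fun c d hcd => by
      rw [hMinner', hMinner', ← hJsymm]
      exact hLsa.mem_graph_iff_inner.mp (hgraphL hab) _ _ (hgraphL hcd))
    (fun a b hab => by
      rw [hMinner]
      exact hLpos.re_inner_nonneg (hgraphL hab))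
  set C : H →L[ℂ] H := (S : H →L[ℂ] H).adjoint ∘L (M * (2 * E - 1)) ∘L (S : H →L[ℂ] H) with hC
  have hCnonneg : 0 ≤ C := by
    rw [ContinuousLinearMap.nonneg_iff_isPositive] at hpos ⊢
    exact hpos.adjoint_conj _
  have hCapply (h : H) : C h = J (S.symm ((2 * E - 1) (S h))) := by
    refine ext_inner_right ℂ fun g => ?_
    rw [hC]
    change ⟪(S : H →L[ℂ] H).adjoint (M ((2 * E - 1) (S h))), g⟫_ℂ = _
    rw [ContinuousLinearMap.adjoint_inner_left, hMinner, ContinuousLinearEquiv.coe_coe,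
      S.symm_apply_apply]
  have hunit : IsUnit (1 + C) :=
    CStarAlgebra.isUnit_of_le 1 (le_add_of_nonneg_right hCnonneg)
  obtain ⟨U, hU⟩ := hunit.exists_right_inv
  set g : H := U ((2 : ℂ) • φp) with hg
  have hgeq : g + C g = (2 : ℂ) • φp :=
    congrArg (fun W : H →L[ℂ] H => W ((2 : ℂ) • φp)) hU
  set k : H := E (S g) with hk
  have hKk : K k = absRadial D k := congrArg (fun W : H →L[ℂ] H => W (S g)) hKE
  obtain ⟨ψ, ψ', hψ0, hψc, hψ'c, hψd, hψlim⟩ := hDK.exists_decaying_solution hA hinj hKk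
  refine ⟨fun x => S.symm (ψ x), S.symm.continuous.comp_continuousOn hψc,
    ⟨fun x => -S.symm (ψ' x), (S.symm.continuous.comp_continuousOn hψ'c).neg, fun x hx => ?_⟩,
    ?_, ?_⟩
  · obtain ⟨h₁, h₂⟩ := hψd x hx
    constructor
    · have h₃ := (T.restrictScalars ℝ).hasFDerivAt.comp_hasDerivAt x h₁
      simpa [hT, Function.comp_def] using h₃
    · obtain ⟨y, hy, hy'⟩ := (LinearPMap.mem_graph_iff _).mp (hgraph h₂)
      simp only at hy hy'
      have hy'' : S.symm (ψ x) ∈ (pmapComp J L).domain := hy ▸ y.2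
      refine ⟨hy'', ?_⟩
      have h₃ : (⟨S.symm (ψ x), hy''⟩ : (pmapComp J L).domain) = y := Subtype.ext hy.symm
      rw [h₃, hy', add_zero]
  · have h₁ : C g = (2 : ℂ) • J (S.symm k) - J g := by
      have h₂ : (2 * E - 1) (S g) = (2 : ℂ) • k - S g := by
        rw [two_mul, two_smul, hk]
        rfl
      rw [hCapply, h₂]
      simp
    rw [h₁] at hgeq
    have h₂ : (2 : ℂ) • (J (S.symm k) + S.symm k) = (2 : ℂ) • ((2 : ℂ) • φp) := by
      have h₃ := congrArg J hgeq
      simp only [map_add, map_sub, map_smul, hJJ, hφp] at h₃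
      linear_combination (norm := module) hgeq + h₃
    have h₃ := smul_right_injective H (two_ne_zero (α := ℂ)) h₂
    simp only [Pplus, hψ0]
    change (2⁻¹ : ℂ) • (S.symm k + J (S.symm k)) = φp
    rw [add_comm, h₃, inv_smul_smul₀ two_ne_zero]
  · have h₁ := ((S.symm.continuous.tendsto 0).comp hψlim).norm
    simpa [Function.comp_def] using h₁

theorem IsStrongSolutionOn.exists_mem_graph {J : H →L[ℂ] H} (hJ : IsSignatureOperator J)
    {L : H →ₗ.[ℂ] H} {ψ : ℝ → H} {s : Set ℝ}
    (h : IsStrongSolutionOn (pmapComp J L) (fun _ => 0) ψ s) :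
    ∃ ψ' : ℝ → H, ∀ x ∈ s, HasDerivAt ψ (-ψ' x) x ∧ (ψ x, J (ψ' x)) ∈ L.graph := by
  obtain ⟨ψ', -, h⟩ := h
  refine ⟨fun x => -ψ' x, fun x hx => ?_⟩
  obtain ⟨h₁, h₂, h₃⟩ := h x hx
  refine ⟨by rwa [neg_neg], (mem_graph_pmapComp_iff hJ).mp ?_⟩
  rw [add_zero] at h₃
  change (ψ x, -ψ' x) ∈ _
  rw [h₃, neg_neg]
  exact (pmapComp J L).mem_graph ⟨ψ x, h₂⟩

/-- Half-space problem with decay at infinity: if `L = L* > 0` is densely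
defined and `B = JL` is similar to a self-adjoint operator, then for every `φ₊ ∈ H₊` there is
a unique solution of `dψ/dx = -Bψ` on `(0,∞)` with `P₊ψ(0) = φ₊` and `‖ψ(x)‖ → 0`
as `x → +∞`. -/
theorem statement2 (J : H →L[ℂ] H) (hJ : IsSignatureOperator J)
    (L : H →ₗ.[ℂ] H) (hdense : Dense (L.domain : Set H))
    (hLsa : IsSelfAdjoint L) (hLpos : IsPositivePMap L)
    (hsim : SimilarToSelfAdjoint (pmapComp J L))
    (φp : H) (hφp : J φp = φp) :
    (∃ ψ : ℝ → H,
        ContinuousOn ψ (Set.Ici 0) ∧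
        IsStrongSolutionOn (pmapComp J L) (fun _ => 0) ψ (Set.Ioi 0) ∧
        Pplus J (ψ 0) = φp ∧
        Filter.Tendsto (fun x => ‖ψ x‖) Filter.atTop (nhds 0)) ∧
    (∀ ψ₁ ψ₂ : ℝ → H,
        (ContinuousOn ψ₁ (Set.Ici 0) ∧
          IsStrongSolutionOn (pmapComp J L) (fun _ => 0) ψ₁ (Set.Ioi 0) ∧
          Pplus J (ψ₁ 0) = φp ∧
          Filter.Tendsto (fun x => ‖ψ₁ x‖) Filter.atTop (nhds 0)) →
        (ContinuousOn ψ₂ (Set.Ici 0) ∧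
          IsStrongSolutionOn (pmapComp J L) (fun _ => 0) ψ₂ (Set.Ioi 0) ∧
          Pplus J (ψ₂ 0) = φp ∧
          Filter.Tendsto (fun x => ‖ψ₂ x‖) Filter.atTop (nhds 0)) →
        Set.EqOn ψ₁ ψ₂ (Set.Ici 0)) := by
  refine ⟨exists_solution hJ hLsa hLpos hsim hφp, ?_⟩
  rintro ψ₁ ψ₂ ⟨hc₁, hs₁, hp₁, hl₁⟩ ⟨hc₂, hs₂, hp₂, hl₂⟩
  obtain ⟨ψ₁', hd₁⟩ := hs₁.exists_mem_graph hJ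
  obtain ⟨ψ₂', hd₂⟩ := hs₂.exists_mem_graph hJ
  have h0 : J (ψ₁ 0 - ψ₂ 0) = -(ψ₁ 0 - ψ₂ 0) := by
    have h₁ : Pplus J (ψ₁ 0 - ψ₂ 0) = 0 := by rw [map_sub, hp₁, hp₂, sub_self]
    have h₂ : (2⁻¹ : ℂ) • ((ψ₁ 0 - ψ₂ 0) + J (ψ₁ 0 - ψ₂ 0)) = 0 := h₁
    exact eq_neg_of_add_eq_zero_right ((smul_eq_zero_iff_right (by norm_num)).mp h₂)
  have hlim := (tendsto_zero_iff_norm_tendsto_zero.mpr hl₁).sub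
    (tendsto_zero_iff_norm_tendsto_zero.mpr hl₂)
  rw [sub_zero] at hlim
  have hz := eqOn_zero_of_decay hJ hLpos (w := fun x => ψ₁ x - ψ₂ x)
    (w' := fun x => ψ₁' x - ψ₂' x) (hc₁.sub hc₂)
    (fun x hx => ⟨((hd₁ x hx).1.sub (hd₂ x hx).1).congr_deriv (by abel), by
      simpa using L.graph.sub_mem (hd₁ x hx).2 (hd₂ x hx).2⟩) h0
    hlim
  exact fun x hx => sub_eq_zero.mp (hz hx)

end
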